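/- Let a : [t₀,∞) → (0,∞) be a C¹ function satisfying the differential inequality a'(t) ≥ -ρ₂ exp(-1/(4ρ₁² a(t)²)) for constants ρ₁, ρ₂ > 0. Then a(t) ≥ 1/(3ρ₁ √(ln t)) for all sufficiently large t. -/

import Mathlib

open MeasureTheory Filter Topology

/-- The cubic `z³` is dominated by the Gaussian weight `exp (z² / 8)`. -/
lemma cube_le_exp_sq_div_eight (z : ℝ) : z ^ 3 ≤ 64 * Real.exp (z ^ 2 / 8) := by
  have h := Real.quadratic_le_exp_of_nonneg (by positivity : 0 ≤ z ^ 2 / 8)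
  nlinarith [sq_nonneg (z * (z - 1))]

/-- An affine function is eventually dominated by the power `t ^ (9 / 8)`. -/
lemma eventually_affine_le_exp_mul_log (K D : ℝ) :
    ∀ᶠ t : ℝ in atTop, K * t + D ≤ Real.exp (9 / 8 * Real.log t) := by
  filter_upwards [eventually_ge_atTop 1,
    (tendsto_rpow_atTop (by norm_num : (0 : ℝ) < 1 / 8)).eventually_ge_atTop (K + |D|)]
    with t ht hK
  have h0 : 0 < t := by linarith
  have hsplit : Real.exp (9 / 8 * Real.log t) = t * t ^ (1 / 8 : ℝ) := by
    rw [Real.rpow_def_of_pos h0]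
    nth_rw 2 [← Real.exp_log h0]
    rw [← Real.exp_add]
    ring_nf
  rw [hsplit]
  nlinarith [le_abs_self D, abs_nonneg D]

/-- Logarithmically slow lower bound for the centre-manifold amplitude. -/
theorem stmt5 (a a' : ℝ → ℝ) (t₀ ρ₁ ρ₂ : ℝ) (hρ₁ : 0 < ρ₁) (hρ₂ : 0 < ρ₂)
    (hpos : ∀ t ≥ t₀, 0 < a t)
    (hderiv : ∀ t ≥ t₀, HasDerivAt a (a' t) t)
    (hineq : ∀ t ≥ t₀, a' t ≥ -ρ₂ * Real.exp (-1 / (4 * ρ₁ ^ 2 * (a t) ^ 2))) :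
    ∀ᶠ t in atTop, a t ≥ 1 / (3 * ρ₁ * Real.sqrt (Real.log t)) := by
  set G : ℝ → ℝ := fun t => Real.exp ((1 / (ρ₁ * a t)) ^ 2 / 8) with hG
  have hGd : ∀ t ≥ t₀, HasDerivAt G (G t * (-(a' t) * ρ₁ / 4 * (1 / (ρ₁ * a t)) ^ 3)) t := by
    intro t ht
    have ha := hpos t ht
    have h := (((((hderiv t ht).const_mul ρ₁).fun_inv (by positivity)).fun_pow 2).div_const 8).exp
    simp only [hG, one_div]
    convert h using 1
    norm_num
    field_simp
    ring
  have hGle : ∀ t ≥ t₀, G t * (-(a' t) * ρ₁ / 4 * (1 / (ρ₁ * a t)) ^ 3) ≤ 16 * ρ₁ * ρ₂ := by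
    intro t ht
    have ha := hpos t ht
    have hG0 : 0 < G t := Real.exp_pos _
    have hexp : Real.exp (-1 / (4 * ρ₁ ^ 2 * (a t) ^ 2)) = (G t)⁻¹ * (G t)⁻¹ := by
      simp only [hG, ← Real.exp_neg, ← Real.exp_add]
      congr 1
      field_simp
      ring
    have h1 : -(a' t) ≤ ρ₂ * ((G t)⁻¹ * (G t)⁻¹) := by
      rw [← hexp]
      linarith [hineq t ht]
    calc G t * (-(a' t) * ρ₁ / 4 * (1 / (ρ₁ * a t)) ^ 3)
        ≤ G t * (ρ₂ * ((G t)⁻¹ * (G t)⁻¹) * ρ₁ / 4 * (64 * G t)) := by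
          gcongr
          exact cube_le_exp_sq_div_eight _
      _ = 16 * ρ₁ * ρ₂ := by
          field_simp
          ring
  have hGrowth : ∀ t ≥ t₀, G t - G t₀ ≤ 16 * ρ₁ * ρ₂ * (t - t₀) := fun t ht =>
    (convex_Ici t₀).image_sub_le_mul_sub_of_deriv_le
      (fun s hs => (hGd s hs).continuousAt.continuousWithinAt)
      (fun s hs => (hGd s (interior_subset hs)).differentiableAt.differentiableWithinAt)
      (fun s hs => (hGd s (interior_subset hs)).deriv ▸ hGle s (interior_subset hs))
      t₀ Set.self_mem_Ici t ht ht
  filter_upwards [eventually_ge_atTop t₀, eventually_gt_atTop 1,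
    eventually_affine_le_exp_mul_log (16 * ρ₁ * ρ₂) (G t₀ - 16 * ρ₁ * ρ₂ * t₀)] with t ht ht1 hle
  have ha := hpos t ht
  have hlog := Real.log_pos ht1
  have h1 : (1 / (ρ₁ * a t)) ^ 2 / 8 ≤ 9 / 8 * Real.log t :=
    Real.exp_le_exp.mp (by linarith [hGrowth t ht] : G t ≤ _)
  have h2 : 1 / (ρ₁ * a t) ≤ 3 * Real.sqrt (Real.log t) := by
    refine (sq_le_sq₀ (by positivity) (by positivity)).mp ?_
    rw [mul_pow, Real.sq_sqrt hlog.le]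
    linarith
  have hs := Real.sqrt_pos.mpr hlog
  rw [ge_iff_le, div_le_iff₀ (by positivity)]
  rw [div_le_iff₀ (by positivity)] at h2
  linarith
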